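/- Let G be a connected graph and let S be a maximal isolate set of G of minimum cardinality (an i_0-set) such that the induced subgraph G[S] has at least two isolated vertices and S ≠ V(G). Then G has a total dominating set of cardinality |S|, and hence γ_t(G) ≤ i_0(G). -/

import Mathlib

variable {V : Type*} [Fintype V] [DecidableEq V]

/-- `S` is a total dominating set of `G`: every vertex of `G` has a neighbor in `S`. -/
def IsTotalDomSet (G : SimpleGraph V) (S : Finset V) : Prop :=
  ∀ v : V, ∃ u ∈ S, G.Adj u v

/-- The total domination number: minimum cardinality of a total dominating set. -/
noncomputable def totalDomNum (G : SimpleGraph V) : ℕ :=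
  sInf {n | ∃ S : Finset V, IsTotalDomSet G S ∧ S.card = n}

/-- `S` is an isolate set of `G`: some vertex of `S` has no neighbor in `S`. -/
def IsIsolateSet (G : SimpleGraph V) (S : Finset V) : Prop :=
  ∃ v ∈ S, ∀ u ∈ S, ¬ G.Adj v u

/-- `S` is a maximal isolate set of `G`. -/
def IsMaximalIsolateSet (G : SimpleGraph V) (S : Finset V) : Prop :=
  IsIsolateSet G S ∧ ∀ T : Finset V, S ⊂ T → ¬ IsIsolateSet G T

/-- The isolate number: minimum cardinality of a maximal isolate set. -/
noncomputable def isolateNum (G : SimpleGraph V) : ℕ :=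
  sInf {n | ∃ S : Finset V, IsMaximalIsolateSet G S ∧ S.card = n}

/-!
A vertex outside a maximal isolate set `S` is adjacent to every isolated vertex of `G[S]`, since
otherwise it could be added to `S`. Swap one of two isolated vertices `u`, `v` of `G[S]`, say `v`,
for a vertex `n ∉ S`: in the resulting set, `n` dominates all isolated vertices of `G[S]`, `u`
dominates everything outside `S`, and every other vertex of `S` keeps its neighbors in `S`, none
of which is `v`.
-/

section

variable {W : Type*} {G : SimpleGraph W} {S : Finset W} {u v n : W}

theorem IsTotalDomSet.totalDomNum_le_card (hS : IsTotalDomSet G S) : totalDomNum G ≤ S.card :=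
  Nat.sInf_le ⟨S, hS, rfl⟩

namespace IsMaximalIsolateSet

theorem adj_of_notMem (hS : IsMaximalIsolateSet G S) (hu : u ∈ S)
    (hu_isolated : ∀ w ∈ S, ¬ G.Adj u w) (hn : n ∉ S) : G.Adj u n := by
  classical
  by_contra h_not_adj
  have h_insert : IsIsolateSet G (insert n S) :=
    ⟨u, Finset.mem_insert_of_mem hu, (Finset.forall_mem_insert ..).2 ⟨h_not_adj, hu_isolated⟩⟩
  exact hS.2 (insert n S) (Finset.ssubset_insert hn) h_insert

theorem isTotalDomSet_insert_erase [DecidableEq W] (hS : IsMaximalIsolateSet G S) (hu : u ∈ S)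
    (huv : u ≠ v) (hu_isolated : ∀ w ∈ S, ¬ G.Adj u w) (hv_isolated : ∀ w ∈ S, ¬ G.Adj v w)
    (hn : n ∉ S) :
    IsTotalDomSet G (insert n (S.erase v)) := by
  intro z
  by_cases hz : z ∈ S
  · by_cases hz_isolated : ∀ w ∈ S, ¬ G.Adj z w
    · exact ⟨n, Finset.mem_insert_self _ _, (hS.adj_of_notMem hz hz_isolated hn).symm⟩
    · push Not at hz_isolated
      obtain ⟨w, hw, hzw⟩ := hz_isolated
      have hwv : w ≠ v := by
        rintro rfl
        exact hv_isolated z hz hzw.symm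
      exact ⟨w, Finset.mem_insert_of_mem (Finset.mem_erase_of_ne_of_mem hwv hw), hzw.symm⟩
  · exact ⟨u, Finset.mem_insert_of_mem (Finset.mem_erase_of_ne_of_mem huv hu),
      hS.adj_of_notMem hu hu_isolated hz⟩

end IsMaximalIsolateSet

end

theorem totalDomNum_le_isolateNum_of_two_isolates_general {W : Type*} (G : SimpleGraph W)
    (S : Finset W) (hS : IsMaximalIsolateSet G S)
    (h2 : ∃ u ∈ S, ∃ v ∈ S, u ≠ v ∧ (∀ w ∈ S, ¬ G.Adj u w) ∧ (∀ w ∈ S, ¬ G.Adj v w))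
    (hne : (S : Set W) ≠ Set.univ) :
    (∃ D : Finset W, IsTotalDomSet G D ∧ D.card = S.card) ∧ totalDomNum G ≤ S.card := by
  classical
  obtain ⟨u, hu, v, hv, huv, hu_isolated, hv_isolated⟩ := h2
  obtain ⟨n, hn⟩ : ∃ n, n ∉ S := by
    simpa only [Finset.mem_coe] using (Set.ne_univ_iff_exists_notMem _).1 hne
  have h_dom : IsTotalDomSet G (insert n (S.erase v)) :=
    hS.isTotalDomSet_insert_erase hu huv hu_isolated hv_isolated hn
  have h_card : (insert n (S.erase v)).card = S.card := by
    rw [Finset.card_insert_of_notMem (fun h => hn (Finset.mem_of_mem_erase h)),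
      Finset.card_erase_add_one hv]
  exact ⟨⟨_, h_dom, h_card⟩, h_card ▸ h_dom.totalDomNum_le_card⟩

/-- If `S` is an `i₀`-set of a connected graph `G` such that `G[S]` has at least two
isolated vertices and `S ≠ V(G)`, then `G` has a total dominating set of cardinality
`|S|`, and hence `γ_t(G) ≤ i₀(G)`. -/
theorem totalDomNum_le_isolateNum_of_two_isolates (G : SimpleGraph V)
    (hc : G.Connected) (S : Finset V)
    (hS : IsMaximalIsolateSet G S) (hcard : S.card = isolateNum G)
    (h2 : ∃ u ∈ S, ∃ v ∈ S, u ≠ v ∧ (∀ w ∈ S, ¬ G.Adj u w) ∧ (∀ w ∈ S, ¬ G.Adj v w))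
    (hne : S ≠ Finset.univ) :
    (∃ D : Finset V, IsTotalDomSet G D ∧ D.card = S.card) ∧
      totalDomNum G ≤ isolateNum G := by
  rw [← hcard]
  exact totalDomNum_le_isolateNum_of_two_isolates_general G S hS h2
    (Finset.coe_eq_univ.not.2 hne)
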